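/- Let X ~ Herm(μ, σ²) have an Hermite distribution, i.e. X = U + 2V with U ~ Po(α) and V ~ Po(β) independent, where μ = α + 2β and σ² = 2β, and let a = (a_1,…,a_c) ∈ [0,1]^c with a_1 + ⋯ + a_c ≤ 1. Then the multinomial marking Y = a ∘ X has the multivariate Hermite distribution Herm(μ·a, σ²·a aᵀ): there exist independent random variables U_i ~ Po(α_i) (1 ≤ i ≤ c) and V_{ij} ~ Po(β_{ij}) (1 ≤ i, j ≤ c) such that Y has the same distribution as (U_i + Σ_j V_{ij} + Σ_k V_{ki})_{i=1}^c, with parameters satisfying α_i + Σ_j β_{ij} + Σ_k β_{ki} = μ a_i, 2β_{ii} = σ² a_i², and β_{ij} + β_{ji} = σ² a_i a_j for i ≠ j. -/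

import Mathlib

open MeasureTheory ProbabilityTheory ENNReal

/-- The multinomial probability mass function with parameters `n` and `a`, as an
`ℝ≥0∞`-valued function: `p(y) = (n choose y) ∏ i, a i ^ y i * (1 - |a|) ^ (n - |y|)`,
interpreted as `0` when `|y| > n`. -/
noncomputable def multinomialENN {c : ℕ} (n : ℕ) (a : Fin c → ℝ) (y : Fin c → ℕ) : ℝ≥0∞ :=
  if (∑ i, y i) ≤ n then
    ENNReal.ofReal (((n.factorial : ℝ) /
        ((∏ i, ((y i).factorial : ℝ)) * ((n - ∑ i, y i).factorial : ℝ)))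
      * (∏ i, a i ^ y i) * (1 - ∑ i, a i) ^ (n - ∑ i, y i))
  else 0

/-- The Poisson probability mass function with rate `lam ≥ 0`, as an `ℝ≥0∞`-valued
function: `p(k) = exp(-lam) * lam^k / k!`. -/
noncomputable def poissonENN (lam : ℝ) (k : ℕ) : ℝ≥0∞ :=
  ENNReal.ofReal (Real.exp (-lam) * lam ^ k / k.factorial)

/-- Coefficientwise sum of a family of power series. -/
noncomputable def SS {c : ℕ} {J : Type} (f : J → MvPowerSeries (Fin c) ℝ≥0∞) :
    MvPowerSeries (Fin c) ℝ≥0∞ := fun d => ∑' j, MvPowerSeries.coeff d (f j)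

theorem coeff_SS {c : ℕ} {J : Type} (f : J → MvPowerSeries (Fin c) ℝ≥0∞) (d : Fin c →₀ ℕ) :
    MvPowerSeries.coeff d (SS f) = ∑' j, MvPowerSeries.coeff d (f j) := rfl

theorem SS_mul {c : ℕ} {J K : Type} (f : J → MvPowerSeries (Fin c) ℝ≥0∞)
    (g : K → MvPowerSeries (Fin c) ℝ≥0∞) :
    SS f * SS g = SS (fun p : J × K => f p.1 * g p.2) := by
  ext d
  rw [MvPowerSeries.coeff_mul, coeff_SS]
  simp only [coeff_SS, MvPowerSeries.coeff_mul]
  rw [Summable.tsum_finsetSum (fun _ _ => ENNReal.summable)]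
  refine Finset.sum_congr rfl fun p _ => ?_
  rw [ENNReal.tsum_prod', ← ENNReal.tsum_mul_right]
  refine tsum_congr fun j => ?_
  rw [← ENNReal.tsum_mul_left]

theorem SS_equiv {c : ℕ} {J K : Type} (e : K ≃ J) (f : J → MvPowerSeries (Fin c) ℝ≥0∞) :
    SS f = SS (fun k => f (e k)) := by
  ext d
  rw [coeff_SS, coeff_SS]
  exact (e.tsum_eq (fun j => MvPowerSeries.coeff d (f j))).symm

theorem SS_prod {c : ℕ} {J : Type} (n : ℕ) (f : Fin n → J → MvPowerSeries (Fin c) ℝ≥0∞) :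
    ∏ i, SS (f i) = SS (fun w : Fin n → J => ∏ i, f i (w i)) := by
  induction n with
  | zero =>
    ext d
    rw [coeff_SS]
    simp
  | succ n ih =>
    rw [Fin.prod_univ_succ, ih, SS_mul, SS_equiv (Fin.consEquiv (fun _ : Fin (n+1) => J))]
    congr 1
    funext p
    rw [Fin.prod_univ_succ]
    simp [Fin.consEquiv]

theorem SS_C {c : ℕ} {J : Type} (t : ℝ≥0∞) (f : J → MvPowerSeries (Fin c) ℝ≥0∞) :
    MvPowerSeries.C t * SS f = SS (fun j => MvPowerSeries.C t * f j) := by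
  ext d
  simp only [coeff_SS, MvPowerSeries.coeff_C_mul, ENNReal.tsum_mul_left]

/-- Exponential series. -/
noncomputable def ex {c : ℕ} (f : MvPowerSeries (Fin c) ℝ≥0∞) : MvPowerSeries (Fin c) ℝ≥0∞ :=
  SS (fun n : ℕ => MvPowerSeries.C ((n.factorial : ℝ≥0∞)⁻¹) * f ^ n)

theorem inv_fact_choose (n k l : ℕ) (h : k + l = n) :
    ((n.factorial : ℝ≥0∞)⁻¹) * (n.choose k : ℝ≥0∞)
      = (k.factorial : ℝ≥0∞)⁻¹ * (l.factorial : ℝ≥0∞)⁻¹ := by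
  subst h
  have h1 : ((k + l).choose k : ℝ≥0∞) * k.factorial * l.factorial = (k+l).factorial := by
    have := Nat.add_choose_mul_factorial_mul_factorial k l
    rw [Nat.choose_symm_add] at *
    exact_mod_cast this
  have hk : (k.factorial : ℝ≥0∞) ≠ 0 := by exact_mod_cast k.factorial_ne_zero
  have hl : (l.factorial : ℝ≥0∞) ≠ 0 := by exact_mod_cast l.factorial_ne_zero
  have hc : ((k+l).choose k : ℝ≥0∞) ≠ 0 := by
    exact_mod_cast (Nat.choose_pos (Nat.le_add_right k l)).ne'
  rw [← h1, ENNReal.mul_inv (Or.inr (by simp)) (Or.inr hl), ENNReal.mul_inv (by simp) (by simp)]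
  have := ENNReal.inv_mul_cancel hc (by simp)
  calc _ = ((((k+l).choose k : ℝ≥0∞))⁻¹ * ((k+l).choose k : ℝ≥0∞)) *
      ((k.factorial : ℝ≥0∞)⁻¹ * (l.factorial : ℝ≥0∞)⁻¹) := by ring
    _ = _ := by rw [this, one_mul]

theorem ex_add {c : ℕ} (f g : MvPowerSeries (Fin c) ℝ≥0∞) : ex (f + g) = ex f * ex g := by
  unfold ex
  rw [SS_mul, SS_equiv (Finset.HasAntidiagonal.sigmaAntidiagonalEquivProd (A := ℕ))]
  ext d
  simp only [coeff_SS]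
  rw [ENNReal.tsum_sigma']
  refine tsum_congr fun n => ?_
  rw [tsum_fintype, (Commute.all f g).add_pow', Finset.mul_sum, map_sum,
    ← Finset.sum_coe_sort (Finset.HasAntidiagonal.antidiagonal n)]
  refine Finset.sum_congr rfl fun p _ => ?_
  have hp := Finset.HasAntidiagonal.mem_antidiagonal.1 p.2
  simp only [Finset.HasAntidiagonal.sigmaAntidiagonalEquivProd_apply]
  congr 1
  have := inv_fact_choose n p.1.1 p.1.2 hp
  calc _ = MvPowerSeries.C ((n.factorial : ℝ≥0∞)⁻¹ * (n.choose p.1.1 : ℝ≥0∞))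
        * (f ^ p.1.1 * g ^ p.1.2) := by
        rw [nsmul_eq_mul, map_mul, map_natCast]; ring
    _ = _ := by rw [this, map_mul]; ring

theorem ex_C {c : ℕ} (t : ℝ) (ht : 0 ≤ t) :
    ex (MvPowerSeries.C (ENNReal.ofReal t) : MvPowerSeries (Fin c) ℝ≥0∞)
      = MvPowerSeries.C (ENNReal.ofReal (Real.exp t)) := by
  have key : ∑' n : ℕ, (n.factorial : ℝ≥0∞)⁻¹ * ENNReal.ofReal t ^ n
      = ENNReal.ofReal (Real.exp t) := by
    have hs := Real.summable_pow_div_factorial t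
    rw [Real.exp_eq_exp_ℝ, NormedSpace.exp_eq_tsum_div,
      ENNReal.ofReal_tsum_of_nonneg (fun n => by positivity) hs]
    refine tsum_congr fun n => ?_
    rw [ENNReal.ofReal_div_of_pos (by positivity), ENNReal.ofReal_pow ht,
      ENNReal.ofReal_natCast, ENNReal.div_eq_inv_mul]
  ext d
  unfold ex
  rw [coeff_SS, ← key]
  simp only [← map_pow, ← map_mul, MvPowerSeries.coeff_C]
  split_ifs <;> simp

theorem ex_zero {c : ℕ} : ex (0 : MvPowerSeries (Fin c) ℝ≥0∞) = 1 := by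
  have := ex_C (c := c) 0 le_rfl
  simpa using this

theorem ex_sum {c : ℕ} {ι : Type} (s : Finset ι) (f : ι → MvPowerSeries (Fin c) ℝ≥0∞) :
    ex (∑ i ∈ s, f i) = ∏ i ∈ s, ex (f i) := by
  classical
  induction s using Finset.induction_on with
  | empty => simp [ex_zero]
  | insert i s hi ih => rw [Finset.sum_insert hi, Finset.prod_insert hi, ex_add, ih]

theorem poissonENN_eq (l : ℝ) (hl : 0 ≤ l) (k : ℕ) :
    poissonENN l k = ENNReal.ofReal (Real.exp (-l)) *
      ((k.factorial : ℝ≥0∞)⁻¹ * ENNReal.ofReal l ^ k) := by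
  unfold poissonENN
  rw [ENNReal.ofReal_div_of_pos (by positivity), ENNReal.ofReal_mul (by positivity),
    ENNReal.ofReal_pow hl, ENNReal.ofReal_natCast, ENNReal.div_eq_inv_mul]
  ring

theorem poisson_series {c : ℕ} (l : ℝ) (hl : 0 ≤ l) (f : MvPowerSeries (Fin c) ℝ≥0∞) :
    SS (fun k => MvPowerSeries.C (poissonENN l k) * f ^ k) =
      MvPowerSeries.C (ENNReal.ofReal (Real.exp (-l))) *
        ex (MvPowerSeries.C (ENNReal.ofReal l) * f) := by
  unfold ex
  rw [SS_C]
  congr 1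
  funext k
  rw [poissonENN_eq l hl, map_mul, map_mul, map_pow, mul_pow]
  ring

theorem monom_prod {c : ℕ} {ι : Type} (s : Finset ι) (t : ι → ℝ≥0∞) (m : ι → Fin c →₀ ℕ) :
    ∏ i ∈ s, MvPowerSeries.monomial (m i) (t i)
      = MvPowerSeries.monomial (∑ i ∈ s, m i) (∏ i ∈ s, t i) := by
  classical
  induction s using Finset.induction_on with
  | empty => simp [MvPowerSeries.monomial_zero_one]
  | insert i s hi ih =>
    rw [Finset.prod_insert hi, Finset.sum_insert hi, Finset.prod_insert hi, ih,
      MvPowerSeries.monomial_mul_monomial]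

theorem C_mul_X_pow {c : ℕ} (t : ℝ≥0∞) (i : Fin c) (k : ℕ) :
    MvPowerSeries.C t * (MvPowerSeries.X i : MvPowerSeries (Fin c) ℝ≥0∞) ^ k
      = MvPowerSeries.monomial (Finsupp.single i k) t := by
  classical
  rw [MvPowerSeries.X_pow_eq]
  ext d
  rw [MvPowerSeries.coeff_C_mul, MvPowerSeries.coeff_monomial, MvPowerSeries.coeff_monomial]
  split_ifs <;> simp

theorem coeff_K_pow {c : ℕ} (a : Fin c → ℝ) (ha : ∀ i, 0 ≤ a i) (ha1 : ∑ i, a i ≤ 1)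
    (n : ℕ) (y : Fin c → ℕ) :
    MvPowerSeries.coeff (Finsupp.equivFunOnFinite.symm y)
      ((∑ i, MvPowerSeries.C (ENNReal.ofReal (a i)) * MvPowerSeries.X i +
        MvPowerSeries.C (ENNReal.ofReal (1 - ∑ i, a i)) : MvPowerSeries (Fin c) ℝ≥0∞) ^ n)
      = multinomialENN n a y := by
  classical
  have hb : 0 ≤ 1 - ∑ i, a i := by linarith
  have hin : ∀ k, MvPowerSeries.coeff (Finsupp.equivFunOnFinite.symm y)
      ((∑ i, MvPowerSeries.C (ENNReal.ofReal (a i)) * MvPowerSeries.X i :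
        MvPowerSeries (Fin c) ℝ≥0∞) ^ k) = if ∑ i, y i = k then
          (Nat.multinomial Finset.univ y : ℝ≥0∞) * ∏ i, ENNReal.ofReal (a i) ^ y i else 0 := by
    intro k
    rw [Finset.sum_pow_eq_sum_piAntidiag, map_sum]
    have : ∀ w : Fin c → ℕ, MvPowerSeries.coeff (Finsupp.equivFunOnFinite.symm y)
        ((Nat.multinomial Finset.univ w : MvPowerSeries (Fin c) ℝ≥0∞) *
          ∏ i, (MvPowerSeries.C (ENNReal.ofReal (a i)) * MvPowerSeries.X i) ^ w i) =
        if w = y then (Nat.multinomial Finset.univ y : ℝ≥0∞) *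
          ∏ i, ENNReal.ofReal (a i) ^ y i else 0 := by
      intro w
      simp_rw [mul_pow, ← map_pow, C_mul_X_pow]
      rw [monom_prod, ← map_natCast (MvPowerSeries.C (σ := Fin c) (R := ℝ≥0∞)),
        MvPowerSeries.coeff_C_mul, MvPowerSeries.coeff_monomial]
      have : (Finsupp.equivFunOnFinite.symm y = ∑ i, Finsupp.single i (w i)) ↔ w = y := by
        rw [← Finsupp.equivFunOnFinite_symm_eq_sum, EmbeddingLike.apply_eq_iff_eq, eq_comm]
      simp only [this]
      split_ifs with h
      · rw [h]
      · simp
    simp only [this, Finset.sum_ite_eq', Finset.mem_piAntidiag]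
    simp
  rw [add_pow, map_sum]
  have h2 : ∀ k, MvPowerSeries.coeff (Finsupp.equivFunOnFinite.symm y)
      ((∑ i, MvPowerSeries.C (ENNReal.ofReal (a i)) * MvPowerSeries.X i :
        MvPowerSeries (Fin c) ℝ≥0∞) ^ k * MvPowerSeries.C (ENNReal.ofReal (1 - ∑ i, a i)) ^ (n - k)
        * (n.choose k : MvPowerSeries (Fin c) ℝ≥0∞)) =
      if ∑ i, y i = k then
          ((Nat.multinomial Finset.univ y : ℝ≥0∞) * ∏ i, ENNReal.ofReal (a i) ^ y i)
            * (ENNReal.ofReal (1 - ∑ i, a i) ^ (n - ∑ i, y i) * (n.choose (∑ i, y i) : ℝ≥0∞))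
            else 0 := by
    intro k
    rw [mul_assoc, ← map_pow, ← map_natCast (MvPowerSeries.C (σ := Fin c) (R := ℝ≥0∞)),
      ← map_mul, MvPowerSeries.coeff_mul_C, hin]
    split_ifs with h
    · rw [h]
    · simp
  simp only [h2, Finset.sum_ite_eq, Finset.mem_range, Nat.lt_succ_iff]
  unfold multinomialENN
  split_ifs with h
  · simp_rw [← ENNReal.ofReal_pow (ha _), ← ENNReal.ofReal_pow hb]
    rw [← ENNReal.ofReal_prod_of_nonneg (fun i _ => pow_nonneg (ha i) _),
      ← ENNReal.ofReal_natCast, ← ENNReal.ofReal_natCast,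
      ← ENNReal.ofReal_mul (by positivity),
      ← ENNReal.ofReal_mul (pow_nonneg hb _), ← ENNReal.ofReal_mul]
    swap
    · exact mul_nonneg (by positivity) (Finset.prod_nonneg fun i _ => pow_nonneg (ha i) _)
    congr 1
    have e1 : (∏ i, ((y i).factorial : ℝ)) * (Nat.multinomial Finset.univ y : ℝ)
        = ((∑ i, y i).factorial : ℝ) := by
      exact_mod_cast Nat.multinomial_spec Finset.univ y
    have e2 : ((n.choose (∑ i, y i) : ℝ)) * ((∑ i, y i).factorial : ℝ)
        * ((n - ∑ i, y i).factorial : ℝ) = (n.factorial : ℝ) := by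
      exact_mod_cast Nat.choose_mul_factorial_mul_factorial h
    have hp : (∏ i, ((y i).factorial : ℝ)) ≠ 0 :=
      Finset.prod_ne_zero_iff.2 fun i _ => by positivity
    have hq : ((n - ∑ i, y i).factorial : ℝ) ≠ 0 := by positivity
    rw [← e2, ← e1]
    field_simp
  · rfl

/-- If `X ~ Herm(μ, σ²)` is Hermite (i.e. `X = U + 2V` with `U ~ Po(α)`, `V ~ Po(β)`
independent, `μ = α + 2β`, `σ² = 2β`) and `Y = a ∘ X` is the multinomial marking of `X` with
parameters `a ∈ [0,1]^c`, `|a| ≤ 1`, then `Y ~ Herm(μ a, σ² a aᵀ)` is multivariate Hermite: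
there are nonnegative rates `α' i` and `β' i j` with
`α' i + ∑ j, β' i j + ∑ k, β' k i = μ * a i`, `2 β' i i = σ² * (a i)²`, and
`β' i j + β' j i = σ² * a i * a j` for `i ≠ j`, such that `Y` has the same distribution as
`(U' i + ∑ j, V' i j + ∑ k, V' k i)_i` for independent `U' i ~ Po(α' i)`,
`V' i j ~ Po(β' i j)`. -/
theorem marking_of_hermite
    {Ω : Type*} [MeasurableSpace Ω] (P : Measure Ω) [IsProbabilityMeasure P]
    {c : ℕ} (a : Fin c → ℝ) (ha : ∀ i, a i ∈ Set.Icc (0 : ℝ) 1) (ha1 : ∑ i, a i ≤ 1)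
    (α β : ℝ) (hα : 0 ≤ α) (hβ : 0 ≤ β)
    (X : Ω → ℕ) (Y : Ω → Fin c → ℕ) (hX : Measurable X) (hY : Measurable Y)
    (hXdist : ∀ x : ℕ, P {ω | X ω = x}
      = ∑' u : ℕ, ∑' v : ℕ,
          if u + 2 * v = x then poissonENN α u * poissonENN β v else 0)
    (hMark : ∀ (m : ℕ) (y : Fin c → ℕ),
      P {ω | X ω = m ∧ Y ω = y} = P {ω | X ω = m} * multinomialENN m a y) :
    ∃ (α' : Fin c → ℝ) (β' : Fin c → Fin c → ℝ),
      (∀ i, 0 ≤ α' i) ∧ (∀ i j, 0 ≤ β' i j) ∧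
      (∀ i, α' i + ∑ j, β' i j + ∑ k, β' k i = (α + 2 * β) * a i) ∧
      (∀ i, 2 * β' i i = (2 * β) * a i ^ 2) ∧
      (∀ i j, i ≠ j → β' i j + β' j i = (2 * β) * a i * a j) ∧
      ∀ y : Fin c → ℕ, P {ω | Y ω = y}
        = ∑' u : Fin c → ℕ, ∑' v : Fin c → Fin c → ℕ,
            if (∀ i, u i + ∑ j, v i j + ∑ j, v j i = y i) then
              (∏ i, poissonENN (α' i) (u i)) * ∏ i, ∏ j, poissonENN (β' i j) (v i j)
            else 0 := by
  classical
  have ha0 : ∀ i, 0 ≤ a i := fun i => (ha i).1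
  obtain ⟨b, hbdef⟩ : ∃ b, b = 1 - ∑ i, a i := ⟨_, rfl⟩
  have hb : 0 ≤ b := by rw [hbdef]; linarith
  have hsum : ∑ i, a i = 1 - b := by rw [hbdef]; ring
  have hα' : ∀ i, 0 ≤ (α + 2 * β * b) * a i := fun i => mul_nonneg (by positivity) (ha0 i)
  have hβ' : ∀ i j, 0 ≤ β * (a i * a j) := fun i j =>
    mul_nonneg hβ (mul_nonneg (ha0 i) (ha0 j))
  refine ⟨fun i => (α + 2 * β * b) * a i, fun i j => β * (a i * a j), hα', hβ', ?_, ?_, ?_, ?_⟩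
  · intro i
    rw [← Finset.mul_sum, ← Finset.mul_sum, ← Finset.mul_sum, ← Finset.sum_mul, hsum]
    ring
  · intro i; ring
  · intro i j _; ring
  intro y
  set K : MvPowerSeries (Fin c) ℝ≥0∞ :=
    ∑ i, MvPowerSeries.C (ENNReal.ofReal (a i)) * MvPowerSeries.X i +
        MvPowerSeries.C (ENNReal.ofReal b) with hK
  have hKc : ∀ n, MvPowerSeries.coeff (Finsupp.equivFunOnFinite.symm y) (K ^ n)
      = multinomialENN n a y := by
    intro n
    rw [hK, hbdef]
    exact coeff_K_pow a ha0 ha1 n y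
  -- left side
  have hL : P {ω | Y ω = y} = MvPowerSeries.coeff (Finsupp.equivFunOnFinite.symm y)
      (SS (fun u => MvPowerSeries.C (poissonENN α u) * K ^ u) *
        SS (fun v => MvPowerSeries.C (poissonENN β v) * (K ^ 2) ^ v)) := by
    have h1 : P {ω | Y ω = y} = ∑' m : ℕ, P {ω | X ω = m ∧ Y ω = y} := by
      rw [← measure_iUnion]
      · congr 1
        ext ω
        simp
      · intro m n hmn
        refine Set.disjoint_left.2 fun ω h h' => hmn (h.1.symm.trans h'.1)
      · intro m
        exact (hX (measurableSet_singleton m)).inter (hY (measurableSet_singleton y))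
    rw [h1, SS_mul, coeff_SS, ENNReal.tsum_prod']
    simp_rw [hMark, hXdist, ← ENNReal.tsum_mul_right]
    rw [ENNReal.tsum_comm]
    refine tsum_congr fun u => ?_
    rw [ENNReal.tsum_comm]
    refine tsum_congr fun v => ?_
    rw [tsum_eq_single (u + 2 * v) (fun m hm => by rw [if_neg (Ne.symm hm), zero_mul]),
      if_pos rfl]
    have : MvPowerSeries.C (poissonENN α u) * K ^ u *
        (MvPowerSeries.C (poissonENN β v) * (K ^ 2) ^ v)
        = MvPowerSeries.C (poissonENN α u * poissonENN β v) * K ^ (u + 2 * v) := by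
      rw [map_mul]; ring
    rw [this, MvPowerSeries.coeff_C_mul, hKc]
  -- right side
  have hR : (∑' u : Fin c → ℕ, ∑' v : Fin c → Fin c → ℕ,
            if (∀ i, u i + ∑ j, v i j + ∑ j, v j i = y i) then
              (∏ i, poissonENN ((α + 2 * β * b) * a i) (u i)) *
                ∏ i, ∏ j, poissonENN (β * (a i * a j)) (v i j)
            else 0) = MvPowerSeries.coeff (Finsupp.equivFunOnFinite.symm y)
      ((∏ i, SS (fun k => MvPowerSeries.C (poissonENN ((α + 2 * β * b) * a i) k) *
          MvPowerSeries.X i ^ k)) *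
       ∏ i, ∏ j, SS (fun k => MvPowerSeries.C (poissonENN (β * (a i * a j)) k) *
          (MvPowerSeries.X i * MvPowerSeries.X j) ^ k)) := by
    simp_rw [SS_prod]
    rw [SS_mul, coeff_SS, ENNReal.tsum_prod']
    refine tsum_congr fun u => tsum_congr fun v => ?_
    have hXX : ∀ (t : ℝ≥0∞) (i j : Fin c) (k : ℕ), MvPowerSeries.C t *
        (MvPowerSeries.X i * MvPowerSeries.X j : MvPowerSeries (Fin c) ℝ≥0∞) ^ k =
        MvPowerSeries.monomial (Finsupp.single i k + Finsupp.single j k) t := by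
      intro t i j k
      rw [mul_pow, ← mul_assoc, C_mul_X_pow, MvPowerSeries.X_pow_eq,
        MvPowerSeries.monomial_mul_monomial, mul_one]
    simp_rw [hXX, C_mul_X_pow, monom_prod]
    rw [MvPowerSeries.monomial_mul_monomial, MvPowerSeries.coeff_monomial]
    refine if_congr ?_ rfl rfl
    rw [DFunLike.ext_iff]
    refine forall_congr' fun l => ?_
    simp only [Finsupp.equivFunOnFinite_symm_apply_apply, Finsupp.add_apply,
      Finsupp.finsetSum_apply, Finset.sum_add_distrib, Finsupp.single_apply]
    have e1 : ∑ i, ∑ j, (if i = l then v i j else 0) = ∑ j, v l j := by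
      rw [Finset.sum_comm]; simp
    rw [e1]
    simp only [Finset.sum_ite_eq', Finset.mem_univ, if_true]
    rw [eq_comm, add_assoc]
  rw [hL]
  refine Eq.trans ?_ hR.symm
  congr 1
  rw [poisson_series α hα, poisson_series β hβ]
  simp_rw [fun i => poisson_series (c := c) _ (hα' i), fun i j => poisson_series (c := c) _ (hβ' i j),
    Finset.prod_mul_distrib]
  simp_rw [← ex_sum, ← map_prod]
  have hexp : MvPowerSeries.C (ENNReal.ofReal α) * K + MvPowerSeries.C (ENNReal.ofReal β) * K ^ 2
      = MvPowerSeries.C (ENNReal.ofReal (α * b + β * b ^ 2)) +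
        (∑ i, MvPowerSeries.C (ENNReal.ofReal ((α + 2 * β * b) * a i)) * MvPowerSeries.X i +
        ∑ i, ∑ j, MvPowerSeries.C (ENNReal.ofReal (β * (a i * a j))) *
          (MvPowerSeries.X i * MvPowerSeries.X j)) := by
    have s1 : (∑ i, MvPowerSeries.C (ENNReal.ofReal ((α + 2 * β * b) * a i)) *
          (MvPowerSeries.X i : MvPowerSeries (Fin c) ℝ≥0∞)) =
        (MvPowerSeries.C (ENNReal.ofReal α) + 2 * MvPowerSeries.C (ENNReal.ofReal β) *
          MvPowerSeries.C (ENNReal.ofReal b)) *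
          ∑ i, MvPowerSeries.C (ENNReal.ofReal (a i)) * MvPowerSeries.X i := by
      rw [Finset.mul_sum]
      refine Finset.sum_congr rfl fun i _ => ?_
      rw [ENNReal.ofReal_mul (by positivity), ENNReal.ofReal_add hα (by positivity),
        ENNReal.ofReal_mul (by positivity), ENNReal.ofReal_mul (by positivity)]
      simp only [map_mul, map_add, ENNReal.ofReal_ofNat, map_ofNat]
      ring
    have s2 : (∑ i, ∑ j, MvPowerSeries.C (ENNReal.ofReal (β * (a i * a j))) *
          (MvPowerSeries.X i * MvPowerSeries.X j : MvPowerSeries (Fin c) ℝ≥0∞)) =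
        MvPowerSeries.C (ENNReal.ofReal β) *
          (∑ i, MvPowerSeries.C (ENNReal.ofReal (a i)) * MvPowerSeries.X i) ^ 2 := by
      rw [sq, Finset.sum_mul_sum, Finset.mul_sum]
      refine Finset.sum_congr rfl fun i _ => ?_
      rw [Finset.mul_sum]
      refine Finset.sum_congr rfl fun j _ => ?_
      rw [ENNReal.ofReal_mul hβ, ENNReal.ofReal_mul (ha0 i)]
      simp only [map_mul]
      ring
    rw [s1, s2, hK, ENNReal.ofReal_add (by positivity) (by positivity),
      ENNReal.ofReal_mul hα, ENNReal.ofReal_mul hβ, ENNReal.ofReal_pow hb]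
    simp only [map_mul, map_add, map_pow]
    ring
  rw [mul_mul_mul_comm, ← ex_add, hexp, ex_add, ex_C _ (by positivity), ex_add]
  conv_rhs => rw [mul_mul_mul_comm, ← map_mul]
  rw [← mul_assoc, ← map_mul, ← map_mul]
  congr 2
  simp_rw [← ENNReal.ofReal_prod_of_nonneg (fun _ _ => (Real.exp_pos _).le)]
  rw [← ENNReal.ofReal_prod_of_nonneg
    (fun _ _ => Finset.prod_nonneg fun _ _ => (Real.exp_pos _).le)]
  rw [← ENNReal.ofReal_mul (by positivity), ← ENNReal.ofReal_mul (by positivity),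
    ← ENNReal.ofReal_mul (Finset.prod_nonneg fun _ _ => (Real.exp_pos _).le)]
  congr 1
  simp_rw [← Real.exp_sum]
  simp only [← Real.exp_add]
  congr 1
  simp_rw [Finset.sum_neg_distrib, ← Finset.mul_sum]
  rw [← Finset.sum_mul, hsum]
  ring
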